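/- Let m ≥ 2 and let w_1, …, w_m be nonempty words over an alphabet Σ. Every context-free language L ⊆ w_1^* w_2^* ⋯ w_m^* with ε ∉ L is generated by some context-free grammar G such that every sentential form derivable from the start symbol of G contains at most m − 1 occurrences of nonterminals (i.e., L is ultralinear of rank at most m − 1). -/

import Mathlib

/-- The word-bounded language `w_1^* w_2^* ⋯ w_m^*`. -/
def wordBounded {T : Type} {m : ℕ} (w : Fin m → List T) : Language T :=
  { z | ∃ k : Fin m → ℕ,
      z = (List.ofFn fun i : Fin m => (List.replicate (k i) (w i)).flatten).flatten }

/-- Whether a symbol is a nonterminal. -/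
def Symbol.isNT {T N : Type} : Symbol T N → Bool
  | Symbol.nonterminal _ => true
  | Symbol.terminal _ => false

/-! ### Part 1: abstract unary pumping -/

section Unary

inductive UD {N : Type} (Eps : N → Prop) (Lin : N → N → Prop) (Bin : N → N → N → Prop)
    (U : Finset N) : N → ℕ → Prop
  | eps {X : N} : X ∈ U → Eps X → UD Eps Lin Bin U X 0
  | lin {X Y : N} {n : ℕ} : X ∈ U → Lin X Y → UD Eps Lin Bin U Y n → UD Eps Lin Bin U X (n + 1)
  | bin {X Y Z : N} {k n : ℕ} : X ∈ U → Bin X Y Z → UD Eps Lin Bin U Y k →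
      UD Eps Lin Bin U Z n → UD Eps Lin Bin U X (k + n)

inductive UC {N : Type} (Eps : N → Prop) (Lin : N → N → Prop) (Bin : N → N → N → Prop)
    (U : Finset N) (W : N) : N → ℕ → Prop
  | refl : UC Eps Lin Bin U W W 0
  | lin {X Y : N} {n : ℕ} : X ∈ U → Lin X Y → UC Eps Lin Bin U W Y n →
      UC Eps Lin Bin U W X (n + 1)
  | binl {X Y Z : N} {k n : ℕ} : X ∈ U → Bin X Y Z → UC Eps Lin Bin U W Y k →
      UD Eps Lin Bin U Z n → UC Eps Lin Bin U W X (k + n)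
  | binr {X Y Z : N} {k n : ℕ} : X ∈ U → Bin X Y Z → UD Eps Lin Bin U Y k →
      UC Eps Lin Bin U W Z n → UC Eps Lin Bin U W X (k + n)

variable {N : Type} {Eps : N → Prop} {Lin : N → N → Prop} {Bin : N → N → N → Prop}

theorem UD.mono {U V : Finset N} (h : U ⊆ V) {X : N} {n : ℕ} (hd : UD Eps Lin Bin U X n) :
    UD Eps Lin Bin V X n := by
  induction hd with
  | eps h1 h2 => exact .eps (h h1) h2
  | lin h1 h2 _ ih => exact .lin (h h1) h2 ih
  | bin h1 h2 _ _ ih1 ih2 => exact .bin (h h1) h2 ih1 ih2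

theorem UC.mono {U V : Finset N} (h : U ⊆ V) {W X : N} {n : ℕ} (hd : UC Eps Lin Bin U W X n) :
    UC Eps Lin Bin V W X n := by
  induction hd with
  | refl => exact .refl
  | lin h1 h2 _ ih => exact .lin (h h1) h2 ih
  | binl h1 h2 _ h4 ih1 => exact .binl (h h1) h2 ih1 (h4.mono h)
  | binr h1 h2 h4 _ ih1 => exact .binr (h h1) h2 (h4.mono h) ih1

theorem UD.mem {U : Finset N} {X : N} {n : ℕ} (hd : UD Eps Lin Bin U X n) : X ∈ U := by
  cases hd <;> assumption

theorem UC.plug {U : Finset N} {W X : N} {d n : ℕ} (hc : UC Eps Lin Bin U W X d)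
    (hd : UD Eps Lin Bin U W n) : UD Eps Lin Bin U X (d + n) := by
  induction hc with
  | refl => simpa using hd
  | @lin X Y k h1 h2 _ ih =>
    have := UD.lin h1 h2 ih
    rwa [show k + 1 + n = k + n + 1 by omega]
  | @binl X Y Z k l h1 h2 _ h4 ih =>
    have := UD.bin h1 h2 ih h4
    rwa [show k + l + n = k + n + l by omega]
  | @binr X Y Z k l h1 h2 h4 _ ih =>
    have := UD.bin h1 h2 h4 ih
    rwa [show k + l + n = k + (l + n) by omega]

/-- The root `X` has children in `V`. -/
def UTop (Eps : N → Prop) (Lin : N → N → Prop) (Bin : N → N → N → Prop) (V : Finset N)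
    (X : N) (n : ℕ) : Prop :=
  (Eps X ∧ n = 0) ∨ (∃ Y k, Lin X Y ∧ UD Eps Lin Bin V Y k ∧ n = k + 1) ∨
    ∃ Y Z k l, Bin X Y Z ∧ UD Eps Lin Bin V Y k ∧ UD Eps Lin Bin V Z l ∧ n = k + l

open Classical in
theorem UD.split {U : Finset N} (X : N) {Z : N} {n : ℕ} (hd : UD Eps Lin Bin U Z n) :
    UD Eps Lin Bin (U.erase X) Z n ∨
      ∃ d n', UC Eps Lin Bin U X Z d ∧ UTop Eps Lin Bin (U.erase X) X n' ∧ n = d + n' := by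
  induction hd with
  | @eps Z h1 h2 =>
    by_cases h : Z = X
    · subst h
      exact .inr ⟨0, 0, .refl, .inl ⟨h2, rfl⟩, rfl⟩
    · exact .inl (.eps (by simp [h, h1]) h2)
  | @lin Z Y n h1 h2 h3 ih =>
    rcases ih with ih | ⟨d, n', hc, ht, rfl⟩
    · by_cases h : Z = X
      · subst h
        exact .inr ⟨0, n + 1, .refl, .inr (.inl ⟨_, _, h2, ih, rfl⟩), by omega⟩
      · exact .inl (.lin (by simp [h, h1]) h2 ih)
    · exact .inr ⟨d + 1, n', .lin h1 h2 hc, ht, by omega⟩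
  | @bin Z Y Y' k n h1 h2 h3 h4 ih1 ih2 =>
    rcases ih1 with ih1 | ⟨d, n', hc, ht, rfl⟩
    · rcases ih2 with ih2 | ⟨d, n', hc, ht, rfl⟩
      · by_cases h : Z = X
        · subst h
          exact .inr ⟨0, k + n, .refl, .inr (.inr ⟨_, _, _, _, h2, ih1, ih2, rfl⟩), by omega⟩
        · exact .inl (.bin (by simp [h, h1]) h2 ih1 ih2)
      · exact .inr ⟨k + d, n', .binr h1 h2 h3 hc, ht, by omega⟩
    · exact .inr ⟨d + n, n', .binl h1 h2 hc h4, ht, by omega⟩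

open Classical in
theorem UD.bounded (c : ℕ) : ∀ (U : Finset N), U.card = c →
    (∀ X ∈ U, ∀ d, UC Eps Lin Bin U X X d → d = 0) → ∀ {X : N} {n : ℕ},
    UD Eps Lin Bin U X n → n ≤ 2 ^ c := by
  induction c with
  | zero =>
    intro U hU _ X n hd
    have := hd.mem
    simp_all
  | succ c ih =>
    intro U hU hnp X n hd
    have hX := hd.mem
    have key : ∀ {Y : N} {k : ℕ}, UD Eps Lin Bin (U.erase X) Y k → k ≤ 2 ^ c := by
      intro Y k
      refine ih (U.erase X) (by simp [hX, hU]) ?_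
      intro Y hY d hd
      exact hnp Y (Finset.mem_of_mem_erase hY) d (hd.mono (Finset.erase_subset _ _))
    have h1 : 1 ≤ 2 ^ c := Nat.one_le_two_pow
    rw [pow_succ]
    rcases hd.split X with h | ⟨d, n', hc, ht, rfl⟩
    · have := h.mem
      simp at this
    · have := hnp X hX d hc
      subst this
      rcases ht with ⟨_, rfl⟩ | ⟨Y, k, _, h, rfl⟩ | ⟨Y, Z, k, l, _, h, h', rfl⟩
      · omega
      · have := key h
        omega
      · have := key h
        have := key h'
        omega

theorem UC.iter {U : Finset N} {X : N} {d n : ℕ} (hc : UC Eps Lin Bin U X X d)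
    (hd : UD Eps Lin Bin U X n) (k : ℕ) : UD Eps Lin Bin U X (n + k * d) := by
  induction k with
  | zero => simpa using hd
  | succ k ih =>
    have := hc.plug ih
    rwa [show n + (k + 1) * d = d + (n + k * d) by ring]

open Classical in
theorem UD.pump (U : Finset N) : ∃ P, 0 < P ∧ ∀ X n, UD Eps Lin Bin U X n → 2 ^ U.card < n →
    ∀ j, UD Eps Lin Bin U X (n + j * P) := by
  let dd : N → ℕ := fun X => if h : ∃ d, 0 < d ∧ UC Eps Lin Bin U X X d then h.choose else 1
  have dpos : ∀ X, 0 < dd X := by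
    intro X
    simp only [dd]
    split
    · next h => exact h.choose_spec.1
    · exact one_pos
  let V := U.filter fun X => ¬ ∃ d, 0 < d ∧ UC Eps Lin Bin U X X d
  have hVU : V ⊆ U := Finset.filter_subset _ _
  refine ⟨∏ X ∈ U, dd X, Finset.prod_pos fun X _ => dpos X, ?_⟩
  have main : ∀ X n, UD Eps Lin Bin U X n → UD Eps Lin Bin V X n ∨
      ∀ j, UD Eps Lin Bin U X (n + j * ∏ X ∈ U, dd X) := by
    intro X n hd
    have own : ∀ X n, UD Eps Lin Bin U X n → X ∉ V →
        ∀ j, UD Eps Lin Bin U X (n + j * ∏ X ∈ U, dd X) := by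
      intro X n hd hV j
      have hX := hd.mem
      have hex : ∃ d, 0 < d ∧ UC Eps Lin Bin U X X d := by
        by_contra h
        exact hV (by simp only [V, Finset.mem_filter]; exact ⟨hX, h⟩)
      have hc : UC Eps Lin Bin U X X (dd X) := by
        simp only [dd, hex, dif_pos]
        exact hex.choose_spec.2
      obtain ⟨q, hq⟩ := Finset.dvd_prod_of_mem dd hX
      rw [hq, show j * (dd X * q) = (j * q) * dd X by ring]
      exact hc.iter hd _
    induction hd with
    | @eps X h1 h2 =>
      by_cases h : X ∈ V
      · exact .inl (.eps h h2)
      · exact .inr (own _ _ (.eps h1 h2) h)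
    | @lin X Y n h1 h2 h3 ih =>
      by_cases h : X ∈ V
      · rcases ih with ih | ih
        · exact .inl (.lin h h2 ih)
        · refine .inr fun j => ?_
          have := UD.lin h1 h2 (ih j)
          rwa [add_right_comm]
      · exact .inr (own _ _ (.lin h1 h2 h3) h)
    | @bin X Y Z k n h1 h2 h3 h4 ih1 ih2 =>
      by_cases h : X ∈ V
      · rcases ih1 with ih1 | ih1
        · rcases ih2 with ih2 | ih2
          · exact .inl (.bin h h2 ih1 ih2)
          · refine .inr fun j => ?_
            have := UD.bin h1 h2 h3 (ih2 j)
            rwa [add_assoc]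
        · refine .inr fun j => ?_
          have := UD.bin h1 h2 (ih1 j) h4
          rwa [add_right_comm]
      · exact .inr (own _ _ (.bin h1 h2 h3 h4) h)
  intro X n hd hn
  rcases main X n hd with h | h
  · exfalso
    have hb := UD.bounded V.card V rfl (by
      intro Y hY d hc
      by_contra hd0
      exact (Finset.mem_filter.1 hY).2 ⟨d, Nat.pos_of_ne_zero hd0, hc.mono hVU⟩) h
    have : 2 ^ V.card ≤ 2 ^ U.card := Nat.pow_le_pow_right (by norm_num) (Finset.card_le_card hVU)
    omega
  · exact h

/-- Uniform eventual periodicity, with a period divisible by a prescribed number. -/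
theorem UD.periodic (U : Finset N) (P0 : ℕ) (hP0 : 0 < P0) : ∃ P M, 0 < P ∧ P0 ∣ P ∧
    ∀ X n, UD Eps Lin Bin U X n → n ≤ M ∨
      ∃ b ≤ M, ∃ k, n = b + k * P ∧ ∀ j, UD Eps Lin Bin U X (b + j * P) := by
  obtain ⟨P1, hP1, hp⟩ := UD.pump (Eps := Eps) (Lin := Lin) (Bin := Bin) U
  let P := P0 * P1
  have hP : 0 < P := Nat.mul_pos hP0 hP1
  let f : N → ℕ → ℕ := fun X r => sInf {n | UD Eps Lin Bin U X n ∧ 2 ^ U.card < n ∧ n % P = r}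
  let M := max (2 ^ U.card) (U.sup fun X => (Finset.range P).sup (f X))
  refine ⟨P, M, hP, ⟨P1, rfl⟩, fun X n hd => ?_⟩
  by_cases hn : n ≤ 2 ^ U.card
  · exact .inl (le_max_of_le_left hn)
  right
  have hmem : n ∈ {n' | UD Eps Lin Bin U X n' ∧ 2 ^ U.card < n' ∧ n' % P = n % P} :=
    ⟨hd, by omega, rfl⟩
  have hle : f X (n % P) ≤ n := Nat.sInf_le hmem
  obtain ⟨hb1, hb2, hb3⟩ := Nat.sInf_mem ⟨n, hmem⟩
  refine ⟨f X (n % P), ?_, ?_⟩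
  · refine le_max_of_le_right ?_
    refine le_trans ?_ (Finset.le_sup (f := fun X => (Finset.range P).sup (f X)) hd.mem)
    exact Finset.le_sup (f := f X) (Finset.mem_range.2 (Nat.mod_lt _ hP))
  · obtain ⟨k, hk⟩ := (Nat.modEq_iff_dvd' hle).1 hb3
    refine ⟨k, ?_, fun j => ?_⟩
    · rw [mul_comm] at hk
      omega
    · have := hp X _ hb1 hb2 (j * P0)
      rwa [show j * P0 * P1 = j * P by simp only [P]; ring] at this

end Unary

/-! ### Part 2: yields of sentential forms -/

inductive Yld {T : Type} (g : ContextFreeGrammar T) : List (Symbol T g.NT) → List T → Prop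
  | nil : Yld g [] []
  | term {a : T} {β : List (Symbol T g.NT)} {z : List T} :
      Yld g β z → Yld g (Symbol.terminal a :: β) (a :: z)
  | nt {r : ContextFreeRule T g.NT} {β : List (Symbol T g.NT)} {u v : List T} :
      r ∈ g.rules → Yld g r.output u → Yld g β v →
      Yld g (Symbol.nonterminal r.input :: β) (u ++ v)

section Yields
variable {T : Type} {g : ContextFreeGrammar T}

theorem Yld.append {α β : List (Symbol T g.NT)} {u v : List T} (h : Yld g α u)
    (h' : Yld g β v) : Yld g (α ++ β) (u ++ v) := by
  induction h with
  | nil => simpa using h'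
  | term _ ih => exact .term ih
  | nt h1 h2 _ _ ih =>
    rw [List.append_assoc]
    exact .nt h1 h2 ih

theorem Yld.split {α β : List (Symbol T g.NT)} {z : List T} (h : Yld g (α ++ β) z) :
    ∃ u v, z = u ++ v ∧ Yld g α u ∧ Yld g β v := by
  induction α generalizing z with
  | nil => exact ⟨[], z, rfl, .nil, h⟩
  | cons s α ih =>
    cases h with
    | term h =>
      obtain ⟨u, v, rfl, h1, h2⟩ := ih h
      exact ⟨_ :: u, v, rfl, .term h1, h2⟩
    | nt h1 h2 h3 =>
      obtain ⟨u, v, rfl, h4, h5⟩ := ih h3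
      exact ⟨_ ++ u, v, by simp, .nt h1 h2 h4, h5⟩

theorem Yld.terminals (z : List T) : Yld g (z.map Symbol.terminal) z := by
  induction z with
  | nil => exact .nil
  | cons a z ih => exact .term ih

theorem Yld.of_derives {α : List (Symbol T g.NT)} {z : List T}
    (h : g.Derives α (z.map Symbol.terminal)) : Yld g α z := by
  induction h using Relation.ReflTransGen.head_induction_on with
  | refl => exact Yld.terminals z
  | head h _ ih =>
    obtain ⟨r, hr, hrw⟩ := h
    obtain ⟨p, q, rfl, rfl⟩ := hrw.exists_parts
    obtain ⟨u, v, rfl, h1, h2⟩ := ih.split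
    obtain ⟨u1, u2, rfl, h3, h4⟩ := h1.split
    have := Yld.nt hr h4 .nil
    rw [List.append_nil] at this
    exact (h3.append this).append h2

theorem Yld.derives {α : List (Symbol T g.NT)} {z : List T} (h : Yld g α z) :
    g.Derives α (z.map Symbol.terminal) := by
  induction h with
  | nil => exact ContextFreeGrammar.Derives.refl _
  | @term a β z _ ih => simpa using ih.append_left [Symbol.terminal a]
  | @nt r β u v hr _ _ ih1 ih2 =>
    have h1 : g.Derives [Symbol.nonterminal r.input] (u.map Symbol.terminal) :=
      ContextFreeGrammar.Produces.trans_derives ⟨r, hr, .input_output⟩ ih1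
    have := (h1.append_right β).trans (ih2.append_left (u.map Symbol.terminal))
    simpa using this

theorem mem_language_iff_yld (z : List T) :
    z ∈ g.language ↔ Yld g [Symbol.nonterminal g.initial] z :=
  ⟨fun h => Yld.of_derives h, fun h => h.derives⟩

/-- The finite set of relevant sentential forms. -/
def items (g : ContextFreeGrammar T) : Set (List (Symbol T g.NT)) :=
  {X | X <:+ [Symbol.nonterminal g.initial] ∨ ∃ r ∈ g.rules, X <:+ r.output}

theorem items_finite (g : ContextFreeGrammar T) : (items g).Finite := by
  have hs : ∀ l : List (Symbol T g.NT), {X | X <:+ l}.Finite := by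
    intro l
    refine (l.tails.finite_toSet).subset ?_
    intro X hX
    simpa using hX
  refine ((hs [Symbol.nonterminal g.initial]).union
    (g.rules.finite_toSet.biUnion fun r _ => hs r.output)).subset ?_
  rintro X (h | ⟨r, hr, h⟩)
  · exact .inl h
  · exact .inr (Set.mem_biUnion hr h)

theorem items_tail {s : Symbol T g.NT} {β : List (Symbol T g.NT)} (h : s :: β ∈ items g) :
    β ∈ items g := by
  have hb : β <:+ s :: β := List.suffix_cons s β
  rcases h with h | ⟨r, hr, h⟩
  · exact .inl (hb.trans h)
  · exact .inr ⟨r, hr, hb.trans h⟩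

theorem items_output {r : ContextFreeRule T g.NT} (h : r ∈ g.rules) : r.output ∈ items g :=
  .inr ⟨r, h, List.suffix_refl _⟩

end Yields

/-! ### Part 3: the automaton of `w_1^* ⋯ w_m^*` -/

inductive Pth {T : Type} {m : ℕ} (w : Fin m → List T) :
    Fin m × List T → List T → Fin m × List T → Prop
  | nil (s : Fin m × List T) : Pth w s [] s
  | letter {i : Fin m} {a : T} {x z : List T} {t : Fin m × List T} :
      Pth w (i, x ++ [a]) z t → Pth w (i, a :: x) (a :: z) t
  | eps {i j : Fin m} {z : List T} {t : Fin m × List T} :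
      i < j → Pth w (j, w j) z t → Pth w (i, w i) z t

section Paths
variable {T : Type} {m : ℕ} {w : Fin m → List T}

theorem Pth.trans {s t r : Fin m × List T} {u v : List T} (h : Pth w s u r) (h' : Pth w r v t) :
    Pth w s (u ++ v) t := by
  induction h with
  | nil => exact h'
  | letter _ ih => exact .letter (ih h')
  | eps h1 _ ih => exact .eps h1 (ih h')

theorem Pth.split {s t : Fin m × List T} {u v : List T} (h : Pth w s (u ++ v) t) :
    ∃ r, Pth w s u r ∧ Pth w r v t := by
  generalize hz : u ++ v = z at h
  induction h generalizing u with
  | nil s =>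
    obtain ⟨rfl, rfl⟩ := List.append_eq_nil_iff.1 hz
    exact ⟨s, .nil s, .nil s⟩
  | @letter i a x z t h ih =>
    cases u with
    | nil =>
      simp only [List.nil_append] at hz
      subst hz
      exact ⟨_, .nil _, .letter h⟩
    | cons b u =>
      simp only [List.cons_append, List.cons.injEq] at hz
      obtain ⟨rfl, hz⟩ := hz
      obtain ⟨r, h1, h2⟩ := ih hz
      exact ⟨r, .letter h1, h2⟩
  | eps h1 _ ih =>
    obtain ⟨r, h2, h3⟩ := ih hz
    exact ⟨r, .eps h1 h2, h3⟩

theorem Pth.le {s t : Fin m × List T} {z : List T} (h : Pth w s z t) : s.1 ≤ t.1 := by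
  induction h with
  | nil => exact le_rfl
  | letter _ ih => exact ih
  | eps h1 _ ih => exact (le_of_lt h1).trans ih

/-- good states -/
def gst (w : Fin m → List T) : Set (Fin m × List T) := {s | s.2 ~r w s.1}

theorem gst_finite (w : Fin m → List T) : (gst w).Finite := by
  have h : ∀ l : List T, {x | x ~r l}.Finite := by
    intro l
    refine (l.cyclicPermutations.finite_toSet).subset ?_
    intro x hx
    simpa using hx
  refine (Set.finite_iUnion fun i : Fin m => (h (w i)).image (fun x => (i, x))).subset ?_
  rintro ⟨i, x⟩ hx
  exact Set.mem_iUnion.2 ⟨i, x, hx, rfl⟩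

theorem Pth.good {s t : Fin m × List T} {z : List T} (h : Pth w s z t) (hs : s ∈ gst w) :
    t ∈ gst w := by
  induction h with
  | nil => exact hs
  | @letter i a x z t h ih =>
    refine ih (List.IsRotated.trans ?_ hs)
    exact (List.IsRotated.symm ⟨1, by simp⟩)
  | eps h1 _ ih => exact ih (List.IsRotated.refl _)

theorem Pth.letters {s t : Fin m × List T} {z : List T} (h : Pth w s z t) (hs : s ∈ gst w) :
    ∀ a ∈ z, ∃ i, a ∈ w i := by
  induction h with
  | nil => simp
  | @letter i a x z t h ih =>
    intro b hb
    rcases List.mem_cons.1 hb with rfl | hb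
    · exact ⟨i, (List.IsRotated.mem_iff (show _ ~r w i from hs)).1 (by simp)⟩
    · refine ih (List.IsRotated.trans ?_ hs) b hb
      exact (List.IsRotated.symm ⟨1, by simp⟩)
  | eps h1 _ ih => exact ih (List.IsRotated.refl _)

theorem Pth.det {s t t' : Fin m × List T} {z z' : List T} (h : Pth w s z t) (h' : Pth w s z' t')
    (ht : s.1 = t.1) (ht' : s.1 = t'.1) (hl : z.length = z'.length) : z = z' := by
  induction h generalizing z' with
  | nil => simpa [eq_comm] using hl
  | @letter i a x z t h ih =>
    cases z' with
    | nil => simp at hl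
    | cons b z' =>
      generalize hs : (i, a :: x) = s' at h'
      cases h' with
      | letter h' =>
        obtain ⟨rfl, hx⟩ := Prod.mk.inj hs
        obtain ⟨rfl, rfl⟩ := List.cons.inj hx
        rw [ih h' ht ht' (by simpa using hl)]
      | @eps i' j _ _ h1 h' =>
        obtain ⟨rfl, hx⟩ := Prod.mk.inj hs
        have := h'.le
        simp only at ht' this
        rw [← ht'] at this
        exact absurd h1 (not_lt.2 this)
  | @eps i j z t h1 h2 ih =>
    have := h2.le
    simp only at ht this
    rw [← ht] at this
    exact absurd h1 (not_lt.2 this)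

/-- power of a word -/
def pw (c : List T) (k : ℕ) : List T := (List.replicate k c).flatten

@[simp] theorem pw_zero (c : List T) : pw c 0 = [] := by simp [pw]
theorem pw_succ (c : List T) (k : ℕ) : pw c (k + 1) = c ++ pw c k := by
  simp [pw, List.replicate_succ]
theorem pw_succ' (c : List T) (k : ℕ) : pw c (k + 1) = pw c k ++ c := by
  simp [pw, List.replicate_succ']
@[simp] theorem pw_length (c : List T) (k : ℕ) : (pw c k).length = k * c.length := by
  simp [pw]

theorem Pth.rot (i : Fin m) (x y : List T) : Pth w (i, x ++ y) x (i, y ++ x) := by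
  induction x generalizing y with
  | nil => simpa using Pth.nil _
  | cons a x ih =>
    have := ih (y ++ [a])
    refine .letter ?_
    simpa using this

theorem Pth.pow {s : Fin m × List T} {c : List T} (h : Pth w s c s) (k : ℕ) :
    Pth w s (pw c k) s := by
  induction k with
  | zero => simpa using Pth.nil _
  | succ k ih =>
    rw [pw_succ]
    exact h.trans ih

/-- loop word -/
def lpw (P : ℕ) (s : Fin m × List T) : List T := pw s.2 (P / s.2.length)

theorem lpw_path (P : ℕ) (s : Fin m × List T) : Pth w s (lpw P s) s := by
  refine Pth.pow ?_ _
  simpa using Pth.rot (w := w) s.1 s.2 []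

theorem lpw_length {P : ℕ} (hP : (∏ i, (w i).length) ∣ P) {s : Fin m × List T}
    (hs : s ∈ gst w) : (lpw P s).length = P := by
  have h1 : s.2.length = (w s.1).length := (List.IsRotated.perm hs).length_eq
  rw [lpw, pw_length, h1]
  exact Nat.div_mul_cancel ((Finset.dvd_prod_of_mem _ (Finset.mem_univ s.1)).trans hP)

theorem pth_of_wordBounded (hm : 0 < m) {z : List T} (hz : z ∈ wordBounded w) :
    Pth w (⟨0, hm⟩, w ⟨0, hm⟩) z (⟨m - 1, by omega⟩, w ⟨m - 1, by omega⟩) := by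
  obtain ⟨k, rfl⟩ := hz
  have key : ∀ n (hn : n < m), Pth w (⟨0, hm⟩, w ⟨0, hm⟩)
      ((List.ofFn fun i : Fin (n + 1) =>
        pw (w ⟨i, by omega⟩) (k ⟨i, by omega⟩)).flatten) (⟨n, hn⟩, w ⟨n, hn⟩) := by
    intro n
    have lp : ∀ i : Fin m, Pth w (i, w i) (pw (w i) (k i)) (i, w i) := fun i =>
      Pth.pow (by simpa using Pth.rot (w := w) i (w i) []) _
    induction n with
    | zero =>
      intro hn
      simpa using lp ⟨0, hm⟩
    | succ n ih =>
      intro hn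
      rw [List.ofFn_succ_last, List.flatten_append]
      refine (ih (by omega)).trans ?_
      refine .eps (j := ⟨n + 1, hn⟩) (by simp) ?_
      simpa using lp ⟨n + 1, hn⟩
  obtain ⟨n, rfl⟩ : ∃ n, m = n + 1 := ⟨m - 1, by omega⟩
  exact key n (by omega)

end Paths

/-! ### Part 4: semantic grammars -/

section Semantic
variable {T : Type}

def symL : Symbol T (Language T × ℕ) → Language T
  | Symbol.terminal a => {[a]}
  | Symbol.nonterminal k => k.1

def symP : Symbol T (Language T × ℕ) → ℕ
  | Symbol.terminal _ => 0
  | Symbol.nonterminal k => max k.2 1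

def formL (α : List (Symbol T (Language T × ℕ))) : Language T := (α.map symL).prod
def formP (α : List (Symbol T (Language T × ℕ))) : ℕ := (α.map symP).sum

theorem formL_terminals (z : List T) : formL (z.map Symbol.terminal) = {z} := by
  induction z with
  | nil => rfl
  | cons a z ih =>
    have : formL ((a :: z).map Symbol.terminal) = {[a]} * formL (z.map Symbol.terminal) := by
      simp [formL, symL]
    rw [this, ih]
    exact (Set.image2_singleton (f := (· ++ ·)))

theorem formP_terminals (z : List T) : formP (z.map Symbol.terminal) = 0 := by
  induction z with
  | nil => rfl
  | cons a z ih => simpa [formP, symP] using ih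

theorem formL_append (α β : List (Symbol T (Language T × ℕ))) :
    formL (α ++ β) = formL α * formL β := by simp [formL]
theorem formP_append (α β : List (Symbol T (Language T × ℕ))) :
    formP (α ++ β) = formP α + formP β := by simp [formP]

theorem count_le_formP (α : List (Symbol T (Language T × ℕ))) :
    α.countP Symbol.isNT ≤ formP α := by
  induction α with
  | nil => simp
  | cons s α ih =>
    cases s with
    | terminal a => simpa [formP, symP, Symbol.isNT] using ih
    | nonterminal k =>
      simp only [formP, List.map_cons, List.sum_cons, symP, List.countP_cons, Symbol.isNT,
        if_true] at ih ⊢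
      have := le_max_right k.2 1
      omega

/-- All sound rules of bounded size over a given set of symbols. -/
def semRules (F : Set (Language T × ℕ)) (A : Set T) (B : ℕ) :
    Set (ContextFreeRule T (Language T × ℕ)) :=
  {r | r.input ∈ F ∧ r.output.length ≤ B ∧
    (∀ s ∈ r.output, s ∈ Set.image Symbol.terminal A ∪ Set.image Symbol.nonterminal F) ∧
    formL r.output ≤ r.input.1 ∧ formP r.output ≤ max r.input.2 1}

theorem semRules_finite {F : Set (Language T × ℕ)} {A : Set T} (hF : F.Finite) (hA : A.Finite)
    (B : ℕ) : (semRules F A B).Finite := by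
  have hS : (Set.image Symbol.terminal A ∪ Set.image Symbol.nonterminal F :
      Set (Symbol T (Language T × ℕ))).Finite := (hA.image _).union (hF.image _)
  generalize hSe : (Set.image Symbol.terminal A ∪ Set.image Symbol.nonterminal F :
      Set (Symbol T (Language T × ℕ))) = S at hS
  have hl : {l : List (Symbol T (Language T × ℕ)) | l.length ≤ B ∧ ∀ s ∈ l, s ∈ S}.Finite := by
    have : Finite S := hS
    refine ((List.finite_length_le S B).image (List.map Subtype.val)).subset ?_
    rintro l ⟨h1, h2⟩
    lift l to List S using h2
    exact ⟨l, by simpa using h1, rfl⟩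
  refine ((hF.prod hl).image (fun x => (⟨x.1, x.2⟩ :
    ContextFreeRule T (Language T × ℕ)))).subset ?_
  rintro ⟨k, l⟩ ⟨h1, h2, h3, _⟩
  rw [hSe] at h3
  exact ⟨(k, l), ⟨h1, h2, h3⟩, rfl⟩

noncomputable def semG (F : Set (Language T × ℕ)) (A : Set T) (B : ℕ)
    (hf : (semRules F A B).Finite) (s : Language T × ℕ) : ContextFreeGrammar T :=
  ⟨Language T × ℕ, s, hf.toFinset⟩

variable {F : Set (Language T × ℕ)} {A : Set T} {B : ℕ} {hf : (semRules F A B).Finite}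
  {s : Language T × ℕ}

theorem semRules_step {r : ContextFreeRule T (Language T × ℕ)} (hr : r ∈ semRules F A B)
    {α β : List (Symbol T (Language T × ℕ))} (h : r.Rewrites α β) :
    formL β ≤ formL α ∧ formP β ≤ formP α := by
  obtain ⟨p, q, rfl, rfl⟩ := h.exists_parts
  obtain ⟨_, _, _, h1, h2⟩ := hr
  constructor
  · have e : formL [Symbol.nonterminal r.input] = r.input.1 := by simp [formL, symL]
    rw [formL_append, formL_append, formL_append, formL_append, e]
    gcongr
  · have e : formP [Symbol.nonterminal r.input] = max r.input.2 1 := by simp [formP, symP]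
    rw [formP_append, formP_append, formP_append, formP_append, e]
    gcongr

theorem semG_derives {α β : List (Symbol T (Language T × ℕ))}
    (h : (semG F A B hf s).Derives α β) : formL β ≤ formL α ∧ formP β ≤ formP α := by
  induction h with
  | refl => exact ⟨le_rfl, le_rfl⟩
  | tail _ h ih =>
    obtain ⟨r, hr, hrw⟩ := h
    have := semRules_step (hf.mem_toFinset.1 hr) hrw
    exact ⟨this.1.trans ih.1, this.2.trans ih.2⟩

/-- `z` is generated from the nonterminal `k`. -/
def SGen (F : Set (Language T × ℕ)) (A : Set T) (B : ℕ) (hf : (semRules F A B).Finite)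
    (s k : Language T × ℕ) (z : List T) : Prop :=
  (semG F A B hf s).Derives [Symbol.nonterminal k] (z.map Symbol.terminal)

theorem semG_rule {k : Language T × ℕ} {α β : List (Symbol T (Language T × ℕ))}
    (hk : k ∈ F) (hl : α.length ≤ B)
    (hs : ∀ s ∈ α, s ∈ Set.image Symbol.terminal A ∪ Set.image Symbol.nonterminal F)
    (hL : formL α ≤ k.1) (hP : formP α ≤ max k.2 1) (h : (semG F A B hf s).Derives α β) :
    (semG F A B hf s).Derives [Symbol.nonterminal k] β := by
  refine ContextFreeGrammar.Produces.trans_derives ⟨⟨k, α⟩, ?_, .input_output⟩ h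
  exact hf.mem_toFinset.2 ⟨hk, hl, hs, hL, hP⟩

theorem SGen.rule0 {k : Language T × ℕ} {z : List T} (hk : k ∈ F) (hl : z.length ≤ B)
    (hA : ∀ a ∈ z, a ∈ A) (hz : z ∈ k.1) : SGen F A B hf s k z := by
  refine semG_rule hk (α := z.map Symbol.terminal) (by simpa using hl) ?_ ?_ ?_
    (ContextFreeGrammar.Derives.refl _)
  · intro s hs
    obtain ⟨a, ha, rfl⟩ := List.mem_map.1 hs
    exact .inl ⟨a, hA a ha, rfl⟩
  · rw [formL_terminals]
    exact Set.singleton_subset_iff.2 hz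
  · rw [formP_terminals]
    exact Nat.zero_le _

theorem SGen.rule1 {k k' : Language T × ℕ} {u v z : List T} (hk : k ∈ F) (hk' : k' ∈ F)
    (hl : u.length + v.length + 1 ≤ B) (hu : ∀ a ∈ u, a ∈ A) (hv : ∀ a ∈ v, a ∈ A)
    (hL : ∀ y ∈ k'.1, u ++ y ++ v ∈ k.1) (hP : max k'.2 1 ≤ max k.2 1)
    (hz : SGen F A B hf s k' z) : SGen F A B hf s k (u ++ z ++ v) := by
  refine semG_rule hk (α := u.map Symbol.terminal ++ [Symbol.nonterminal k'] ++
    v.map Symbol.terminal) (by simp; omega) ?_ ?_ ?_ ?_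
  · intro s hs
    simp only [List.mem_append, List.mem_map, List.mem_singleton] at hs
    rcases hs with (⟨a, ha, rfl⟩ | rfl) | ⟨a, ha, rfl⟩
    · exact .inl ⟨a, hu a ha, rfl⟩
    · exact .inr ⟨_, hk', rfl⟩
    · exact .inl ⟨a, hv a ha, rfl⟩
  · rw [formL_append, formL_append, formL_terminals, formL_terminals]
    intro x hx
    obtain ⟨x1, hx1, x2, hx2, rfl⟩ := Language.mem_mul.1 hx
    obtain ⟨x3, hx3, x4, hx4, rfl⟩ := Language.mem_mul.1 hx1
    obtain rfl : x3 = u := hx3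
    obtain rfl : x2 = v := hx2
    exact hL x4 (by simpa [formL, symL] using hx4)
  · rw [formP_append, formP_append, formP_terminals, formP_terminals]
    simpa [formP, symP] using hP
  · have := (ContextFreeGrammar.Derives.append_left hz (u.map Symbol.terminal)).append_right
      (v.map Symbol.terminal)
    rw [List.map_append, List.map_append]
    exact this

theorem SGen.rule2 {k k1 k2 : Language T × ℕ} {u v : List T} (hk : k ∈ F) (hk1 : k1 ∈ F)
    (hk2 : k2 ∈ F) (hl : 2 ≤ B)
    (hL : ∀ y ∈ k1.1, ∀ y' ∈ k2.1, y ++ y' ∈ k.1) (hP : max k1.2 1 + max k2.2 1 ≤ max k.2 1)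
    (hu : SGen F A B hf s k1 u) (hv : SGen F A B hf s k2 v) : SGen F A B hf s k (u ++ v) := by
  refine semG_rule hk (α := [Symbol.nonterminal k1] ++ [Symbol.nonterminal k2])
    (by simpa using hl) ?_ ?_ ?_ ?_
  · intro s hs
    simp only [List.mem_append, List.mem_singleton] at hs
    rcases hs with rfl | rfl
    · exact .inr ⟨_, hk1, rfl⟩
    · exact .inr ⟨_, hk2, rfl⟩
  · rw [formL_append]
    intro x hx
    obtain ⟨x1, hx1, x2, hx2, rfl⟩ := Language.mem_mul.1 hx
    exact hL _ (by simpa [formL, symL] using hx1) _ (by simpa [formL, symL] using hx2)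
  · simpa [formP, symP] using hP
  · have := (ContextFreeGrammar.Derives.append_right hu [Symbol.nonterminal k2]).trans
      (ContextFreeGrammar.Derives.append_left hv (u.map Symbol.terminal))
    rw [List.map_append]
    exact this

end Semantic

/-! ### Part 5: the construction -/

section Construction
variable {T : Type} {m : ℕ}

/-- words derived from `X` labelling a path from `p` to `q` -/
def KL (g : ContextFreeGrammar T) (w : Fin m → List T) (X : List (Symbol T g.NT))
    (p q : Fin m × List T) : Language T := {z | Yld g X z ∧ Pth w p z q}

theorem mem_KL {g : ContextFreeGrammar T} {w : Fin m → List T} {X : List (Symbol T g.NT)}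
    {p q : Fin m × List T} {z : List T} : z ∈ KL g w X p q ↔ Yld g X z ∧ Pth w p z q := Iff.rfl

/-- words `c^k` -/
def PwL (c : List T) : Language T := {z | ∃ k, z = pw c k}

abbrev Nod (T : Type) (m : ℕ) (g : ContextFreeGrammar T) : Type :=
  List (Symbol T g.NT) × (Fin m × List T) × (Fin m × List T)

def nEps (g : ContextFreeGrammar T) (w : Fin m → List T) (x : Nod T m g) : Prop :=
  x.1 = [] ∧ Pth w x.2.1 [] x.2.2
def nLin (g : ContextFreeGrammar T) (w : Fin m → List T) (x y : Nod T m g) : Prop :=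
  ∃ a, x.1 = Symbol.terminal a :: y.1 ∧ Pth w x.2.1 [a] y.2.1 ∧ x.2.2 = y.2.2
def nBin (g : ContextFreeGrammar T) (x y z : Nod T m g) : Prop :=
  ∃ r ∈ g.rules, x.1 = Symbol.nonterminal r.input :: z.1 ∧ y.1 = r.output ∧
    x.2.1 = y.2.1 ∧ y.2.2 = z.2.1 ∧ x.2.2 = z.2.2

variable {g : ContextFreeGrammar T} {w : Fin m → List T}

theorem UD.sound {U : Finset (Nod T m g)} {x : Nod T m g} {n : ℕ}
    (h : UD (nEps g w) (nLin g w) (nBin g) U x n) :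
    ∃ z ∈ KL g w x.1 x.2.1 x.2.2, z.length = n := by
  induction h with
  | @eps x _ h =>
    obtain ⟨X, p, q⟩ := x
    obtain ⟨h1, h2⟩ := h
    simp only at h1 h2
    subst h1
    exact ⟨[], ⟨.nil, h2⟩, rfl⟩
  | @lin x y n _ h _ ih =>
    obtain ⟨X, p, q⟩ := x
    obtain ⟨Y, p', q'⟩ := y
    obtain ⟨a, h1, h2, h3⟩ := h
    simp only at h1 h2 h3 ih
    subst h1 h3
    obtain ⟨z, ⟨hz1, hz2⟩, rfl⟩ := ih
    exact ⟨a :: z, ⟨.term hz1, h2.trans hz2⟩, rfl⟩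
  | @bin x y z k n _ h _ _ ih1 ih2 =>
    obtain ⟨X, p, q⟩ := x
    obtain ⟨Y, p', q'⟩ := y
    obtain ⟨Z, p'', q''⟩ := z
    obtain ⟨r, hr, h1, h2, h3, h4, h5⟩ := h
    simp only at h1 h2 h3 h4 h5 ih1 ih2
    subst h1 h2 h3 h4 h5
    obtain ⟨u, ⟨hu1, hu2⟩, rfl⟩ := ih1
    obtain ⟨v, ⟨hv1, hv2⟩, rfl⟩ := ih2
    exact ⟨u ++ v, ⟨.nt hr hu1 hv1, hu2.trans hv2⟩, by simp⟩

theorem UD.complete {U : Finset (Nod T m g)}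
    (hU : ∀ X p q, (X, p, q) ∈ U ↔ X ∈ items g ∧ p ∈ gst w ∧ q ∈ gst w)
    {X : List (Symbol T g.NT)} {z : List T} (h : Yld g X z) :
    ∀ {p q : Fin m × List T}, X ∈ items g → p ∈ gst w → Pth w p z q →
    UD (nEps g w) (nLin g w) (nBin g) U (X, p, q) z.length := by
  induction h with
  | nil =>
    intro p q hX hp hz
    exact .eps ((hU _ _ _).2 ⟨hX, hp, hz.good hp⟩) ⟨rfl, hz⟩
  | @term a β z _ ih =>
    intro p q hX hp hz
    obtain ⟨r, h1, h2⟩ := Pth.split (u := [a]) hz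
    have := ih (items_tail hX) (h1.good hp) h2
    exact .lin (Y := (β, r, q)) ((hU _ _ _).2 ⟨hX, hp, hz.good hp⟩) ⟨a, rfl, h1, rfl⟩ this
  | @nt r β u v hr _ _ ih1 ih2 =>
    intro p q hX hp hz
    obtain ⟨t, h1, h2⟩ := Pth.split hz
    have e1 := ih1 (items_output hr) hp h1
    have e2 := ih2 (items_tail hX) (h1.good hp) h2
    rw [List.length_append]
    exact .bin (Y := (r.output, p, t)) (Z := (β, t, q)) ((hU _ _ _).2 ⟨hX, hp, hz.good hp⟩) ⟨r, hr, rfl, rfl, rfl, rfl, rfl⟩ e1 e2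

theorem KL_periodic (g : ContextFreeGrammar T) (w : Fin m → List T) (hw : ∀ i, w i ≠ []) :
    ∃ P M, 0 < P ∧ (∏ i, (w i).length) ∣ P ∧ ∀ X ∈ items g, ∀ p ∈ gst w, ∀ q : Fin m × List T,
      p.1 = q.1 → ∀ z ∈ KL g w X p q, z.length ≤ M ∨
        ∃ b k, b.length ≤ M ∧ b ∈ KL g w X p q ∧ z = b ++ pw (lpw P q) k ∧
          z = pw (lpw P p) k ++ b ∧
          (∀ j, b ++ pw (lpw P q) j ∈ KL g w X p q) ∧ ∀ j, pw (lpw P p) j ++ b ∈ KL g w X p q := by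
  have hfin : ((items g) ×ˢ ((gst w) ×ˢ (gst w))).Finite :=
    (items_finite g).prod ((gst_finite w).prod (gst_finite w))
  have hU : ∀ X p q, (X, p, q) ∈ hfin.toFinset ↔ X ∈ items g ∧ p ∈ gst w ∧ q ∈ gst w := by
    intro X p q
    simp
  have hP0 : 0 < ∏ i, (w i).length :=
    Finset.prod_pos fun i _ => List.length_pos_iff.2 (hw i)
  obtain ⟨P, M, hP, hdvd, h⟩ := UD.periodic (Eps := nEps g w) (Lin := nLin g w) (Bin := nBin g)
    hfin.toFinset _ hP0
  refine ⟨P, M, hP, hdvd, ?_⟩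
  intro X hX p hp q hpq z hz
  have hq : q ∈ gst w := hz.2.good hp
  rcases h _ _ (UD.complete hU hz.1 hX hp hz.2) with h | ⟨b, hb, k, hk, hj⟩
  · exact .inl h
  right
  choose y hy hyl using fun j => (hj j).sound
  simp only at hy
  have l1 : ∀ j, y 0 ++ pw (lpw P q) j = y j := by
    intro j
    refine Pth.det ((hy 0).2.trans (Pth.pow (lpw_path P q) j)) (hy j).2 hpq hpq ?_
    rw [List.length_append, pw_length, lpw_length hdvd hq, hyl, hyl]
    omega
  have l2 : ∀ j, pw (lpw P p) j ++ y 0 = y j := by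
    intro j
    refine Pth.det ((Pth.pow (lpw_path P p) j).trans (hy 0).2) (hy j).2 hpq hpq ?_
    rw [List.length_append, pw_length, lpw_length hdvd hp, hyl, hyl]
    omega
  have l3 : z = y k := Pth.det hz.2 (hy k).2 hpq hpq (by rw [hyl, hk])
  refine ⟨y 0, k, by rw [hyl]; omega, hy 0, ?_, ?_, ?_, ?_⟩
  · rw [l1, l3]
  · rw [l2, l3]
  · intro j
    rw [l1]
    exact hy j
  · intro j
    rw [l2]
    exact hy j

/-- plain nonterminal -/
def ntK (g : ContextFreeGrammar T) (w : Fin m → List T) (x : Nod T m g) : Language T × ℕ :=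
  (KL g w x.1 x.2.1 x.2.2, (x.2.2.1 : ℕ) - x.2.1.1)
/-- left-pumping nonterminal -/
def ntL (P : ℕ) (g : ContextFreeGrammar T) (w : Fin m → List T) (x : Nod T m g) :
    Language T × ℕ :=
  (PwL (lpw P x.2.1) * KL g w x.1 x.2.1 x.2.2, (x.2.2.1 : ℕ) - x.2.1.1)
/-- right-pumping nonterminal -/
def ntR (P : ℕ) (g : ContextFreeGrammar T) (w : Fin m → List T) (x : Nod T m g) :
    Language T × ℕ :=
  (KL g w x.1 x.2.1 x.2.2 * PwL (lpw P x.2.2), (x.2.2.1 : ℕ) - x.2.1.1)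
/-- pure loop nonterminal -/
def ntC (P : ℕ) (s : Fin m × List T) : Language T × ℕ := (PwL (lpw P s), 1)

theorem mem_ntK {g : ContextFreeGrammar T} {w : Fin m → List T} {X : List (Symbol T g.NT)}
    {p q : Fin m × List T} {z : List T} :
    z ∈ (ntK g w (X, p, q)).1 ↔ Yld g X z ∧ Pth w p z q := Iff.rfl

def allNT (P : ℕ) (g : ContextFreeGrammar T) (w : Fin m → List T) : Set (Language T × ℕ) :=
  (Set.image (ntK g w) (items g ×ˢ gst w ×ˢ gst w) ∪ Set.image (ntL P g w) (items g ×ˢ gst w ×ˢ gst w)) ∪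
  (Set.image (ntR P g w) (items g ×ˢ gst w ×ˢ gst w) ∪ Set.image (ntC P) (gst w))

theorem allNT_finite (P : ℕ) (g : ContextFreeGrammar T) (w : Fin m → List T) :
    (allNT P g w).Finite := by
  have h : (items g ×ˢ gst w ×ˢ gst w).Finite :=
    (items_finite g).prod ((gst_finite w).prod (gst_finite w))
  exact ((h.image _).union (h.image _)).union ((h.image _).union ((gst_finite w).image _))

def letters (w : Fin m → List T) : Set T := {a | ∃ i, a ∈ w i}

theorem letters_finite (w : Fin m → List T) : (letters w).Finite := by
  refine (Set.finite_iUnion fun i : Fin m => (w i).finite_toSet).subset ?_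
  rintro a ⟨i, hi⟩
  exact Set.mem_iUnion.2 ⟨i, hi⟩

theorem main_complete {P M : ℕ} (hdvd : (∏ i, (w i).length) ∣ P)
    (hper : ∀ X ∈ items g, ∀ p ∈ gst w, ∀ q : Fin m × List T,
      p.1 = q.1 → ∀ z ∈ KL g w X p q, z.length ≤ M ∨
        ∃ b k, b.length ≤ M ∧ b ∈ KL g w X p q ∧ z = b ++ pw (lpw P q) k ∧
          z = pw (lpw P p) k ++ b ∧
          (∀ j, b ++ pw (lpw P q) j ∈ KL g w X p q) ∧ ∀ j, pw (lpw P p) j ++ b ∈ KL g w X p q)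
    (hf : (semRules (allNT P g w) (letters w) (M + P + 2)).Finite) (s : Language T × ℕ)
    {X : List (Symbol T g.NT)} {z : List T} (h : Yld g X z) :
    ∀ {p q : Fin m × List T}, X ∈ items g → p ∈ gst w → p.1 < q.1 → Pth w p z q →
    SGen (allNT P g w) (letters w) (M + P + 2) hf s (ntK g w (X, p, q)) z := by
  have mK : ∀ {X p q}, X ∈ items g → p ∈ gst w → q ∈ gst w →
      ntK g w (X, p, q) ∈ allNT P g w := fun h1 h2 h3 => .inl (.inl ⟨_, ⟨h1, h2, h3⟩, rfl⟩)
  have mL : ∀ {X p q}, X ∈ items g → p ∈ gst w → q ∈ gst w →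
      ntL P g w (X, p, q) ∈ allNT P g w := fun h1 h2 h3 => .inl (.inr ⟨_, ⟨h1, h2, h3⟩, rfl⟩)
  have mR : ∀ {X p q}, X ∈ items g → p ∈ gst w → q ∈ gst w →
      ntR P g w (X, p, q) ∈ allNT P g w := fun h1 h2 h3 => .inr (.inl ⟨_, ⟨h1, h2, h3⟩, rfl⟩)
  have mC : ∀ {p}, p ∈ gst w → ntC P p ∈ allNT P g w := fun h1 => .inr (.inr ⟨_, h1, rfl⟩)
  have ll : ∀ {p : Fin m × List T}, p ∈ gst w → ∀ a ∈ lpw P p, a ∈ letters w :=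
    fun hp => (lpw_path P _).letters hp
  -- loops
  have gC : ∀ {p}, p ∈ gst w → ∀ k,
      SGen (allNT P g w) (letters w) (M + P + 2) hf s (ntC P p) (pw (lpw P p) k) := by
    intro p hp k
    induction k with
    | zero => exact SGen.rule0 (mC hp) (by simp) (by simp) ⟨0, rfl⟩
    | succ k ih =>
      have := SGen.rule1 (A := letters w) (u := lpw P p) (v := []) (mC hp) (mC hp)
        (by simp [lpw_length hdvd hp]; omega) (ll hp) (by simp) (by
          rintro y ⟨j, rfl⟩
          exact ⟨j + 1, by rw [pw_succ]; simp⟩) le_rfl ih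
      rw [pw_succ]
      simpa using this
  have gL : ∀ {X p q z}, X ∈ items g → p ∈ gst w → q ∈ gst w →
      SGen (allNT P g w) (letters w) (M + P + 2) hf s (ntK g w (X, p, q)) z → ∀ k,
      SGen (allNT P g w) (letters w) (M + P + 2) hf s (ntL P g w (X, p, q))
        (pw (lpw P p) k ++ z) := by
    intro X p q z hX hp hq hz k
    induction k with
    | zero =>
      have := SGen.rule1 (A := letters w) (u := []) (v := []) (mL hX hp hq) (mK hX hp hq) (by simp) (by simp)
        (by simp) (by
          intro y hy
          exact Language.mem_mul.2 ⟨[], ⟨0, by simp⟩, y, hy, by simp⟩) le_rfl hz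
      simpa using this
    | succ k ih =>
      have := SGen.rule1 (A := letters w) (u := lpw P p) (v := []) (mL hX hp hq) (mL hX hp hq)
        (by simp [lpw_length hdvd hp]; omega) (ll hp) (by simp) (by
          intro y hy
          obtain ⟨_, ⟨j, rfl⟩, y', hy', rfl⟩ := Language.mem_mul.1 hy
          exact Language.mem_mul.2 ⟨_, ⟨j + 1, rfl⟩, y', hy', by rw [pw_succ]; simp⟩) le_rfl ih
      rw [pw_succ]
      simpa using this
  have gR : ∀ {X p q z}, X ∈ items g → p ∈ gst w → q ∈ gst w →
      SGen (allNT P g w) (letters w) (M + P + 2) hf s (ntK g w (X, p, q)) z → ∀ k,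
      SGen (allNT P g w) (letters w) (M + P + 2) hf s (ntR P g w (X, p, q))
        (z ++ pw (lpw P q) k) := by
    intro X p q z hX hp hq hz k
    induction k with
    | zero =>
      have := SGen.rule1 (A := letters w) (u := []) (v := []) (mR hX hp hq) (mK hX hp hq) (by simp) (by simp)
        (by simp) (by
          intro y hy
          exact Language.mem_mul.2 ⟨y, hy, [], ⟨0, by simp⟩, by simp⟩) le_rfl hz
      simpa using this
    | succ k ih =>
      have := SGen.rule1 (A := letters w) (u := []) (v := lpw P q) (mR hX hp hq) (mR hX hp hq)
        (by simp [lpw_length hdvd hq]; omega) (by simp) (ll hq) (by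
          intro y hy
          obtain ⟨y', hy', _, ⟨j, rfl⟩, rfl⟩ := Language.mem_mul.1 hy
          exact Language.mem_mul.2 ⟨y', hy', _, ⟨j + 1, rfl⟩, by rw [pw_succ']; simp⟩) le_rfl ih
      rw [pw_succ']
      simpa using this
  induction h with
  | nil =>
    intro p q hX hp hpq hz
    exact SGen.rule0 (mK hX hp (hz.good hp)) (by simp) (by simp) ⟨.nil, hz⟩
  | @term a β v hY ih =>
    intro p q hX hp hpq hz
    have hq := hz.good hp
    obtain ⟨r, h1, h2⟩ := Pth.split (u := [a]) hz
    have hr := h1.good hp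
    have hβ := items_tail hX
    have ha : ∀ b ∈ [a], b ∈ letters w := h1.letters hp
    have hpr : (p.1 : ℕ) ≤ r.1 := h1.le
    have hpq' : (p.1 : ℕ) < q.1 := hpq
    rcases lt_or_eq_of_le h2.le with hlt | heq
    · have := SGen.rule1 (A := letters w) (u := [a]) (v := []) (mK hX hp hq) (mK hβ hr hq) (by simp) ha
        (by simp) (by
          rintro y ⟨hy1, hy2⟩
          simpa [mem_ntK] using And.intro (Yld.term hy1) (h1.trans hy2)) (by
          simp only [ntK]; omega) (ih hβ hr hlt h2)
      simpa using this
    · rcases hper β hβ r hr q heq v ⟨hY, h2⟩ with hs | ⟨b, k, hb, hbK, _, hk, _, hj⟩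
      · refine SGen.rule0 (mK hX hp hq) (by simp; omega) (hz.letters hp) ⟨.term hY, hz⟩
      · have := SGen.rule1 (A := letters w) (u := [a]) (v := b) (mK hX hp hq) (mC hr) (by simp; omega) ha
          (hbK.2.letters hr) (by
            rintro y ⟨j, rfl⟩
            have := hj j
            simpa [mem_ntK] using And.intro (Yld.term this.1) (h1.trans this.2)) (by
            simp only [ntK, ntC]; omega) (gC hr k)
        rw [hk]
        simpa using this
  | @nt ρ β u v hρ hu hv ih1 ih2 =>
    intro p q hX hp hpq hz
    have hq := hz.good hp
    obtain ⟨r, h1, h2⟩ := Pth.split hz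
    have hr := h1.good hp
    have hβ := items_tail hX
    have hγ := items_output hρ
    have hpr : (p.1 : ℕ) ≤ r.1 := h1.le
    have hrq : (r.1 : ℕ) ≤ q.1 := h2.le
    have hpq' : (p.1 : ℕ) < q.1 := hpq
    rcases lt_or_eq_of_le h1.le with hlt1 | heq1
    · rcases lt_or_eq_of_le h2.le with hlt | heq
      · have hlt' : (r.1 : ℕ) < q.1 := hlt
        have hlt1' : (p.1 : ℕ) < r.1 := hlt1
        refine SGen.rule2 (mK hX hp hq) (mK hγ hp hr) (mK hβ hr hq) (by omega) ?_ ?_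
          (ih1 hγ hp hlt1 h1) (ih2 hβ hr hlt h2)
        · intro y hy y' hy'
          exact ⟨.nt hρ hy.1 hy'.1, hy.2.trans hy'.2⟩
        · simp only [ntK]
          omega
      · rcases hper β hβ r hr q heq v ⟨hv, h2⟩ with hs | ⟨b, k, hb, hbK, _, hk, _, hj⟩
        · have := SGen.rule1 (A := letters w) (u := []) (v := v) (mK hX hp hq) (mK hγ hp hr) (by simp; omega)
            (by simp) (h2.letters hr) (by
              intro y hy
              exact ⟨.nt hρ hy.1 hv, hy.2.trans h2⟩) (by simp only [ntK]; omega)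
            (ih1 hγ hp hlt1 h1)
          simpa using this
        · have := SGen.rule1 (A := letters w) (u := []) (v := b) (mK hX hp hq) (mR hγ hp hr) (by simp; omega)
            (by simp) (hbK.2.letters hr) (by
              intro y hy
              obtain ⟨y', hy', _, ⟨j, rfl⟩, rfl⟩ := Language.mem_mul.1 hy
              have := hj j
              simpa [mem_ntK] using And.intro (Yld.nt hρ hy'.1 this.1) (hy'.2.trans this.2))
            (by simp only [ntK, ntR]; omega)
            (gR hγ hp hr (ih1 hγ hp hlt1 h1) k)
          rw [hk]
          simpa using this
    · have hlt : r.1 < q.1 := heq1 ▸ hpq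
      rcases hper _ hγ p hp r heq1 u ⟨hu, h1⟩ with hs | ⟨b, k, hb, hbK, hk, _, hj, _⟩
      · have := SGen.rule1 (A := letters w) (u := u) (v := []) (mK hX hp hq) (mK hβ hr hq) (by simp; omega)
          (h1.letters hp) (by simp) (by
            intro y hy
            simpa [mem_ntK] using And.intro (Yld.nt hρ hu hy.1) (h1.trans hy.2))
          (by simp only [ntK]; omega)
          (ih2 hβ hr hlt h2)
        simpa using this
      · have := SGen.rule1 (A := letters w) (u := b) (v := []) (mK hX hp hq) (mL hβ hr hq) (by simp; omega)
          (hbK.2.letters hp) (by simp) (by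
            intro y hy
            obtain ⟨_, ⟨j, rfl⟩, y', hy', rfl⟩ := Language.mem_mul.1 hy
            have := hj j
            simpa [mem_ntK] using And.intro (Yld.nt hρ this.1 hy'.1) (this.2.trans hy'.2))
          (by simp only [ntK, ntL]; omega)
          (gL hβ hr hq (ih2 hβ hr hlt h2) k)
        rw [hk]
        simpa using this

end Construction

theorem stmt_12 {T : Type} {m : ℕ} (hm : 2 ≤ m) (w : Fin m → List T)
    (hw : ∀ i : Fin m, w i ≠ [])
    (L : Language T) (hL : L.IsContextFree) (hsub : L ≤ wordBounded w) (hε : [] ∉ L) :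
    ∃ g : ContextFreeGrammar T,
      g.language = L ∧
      ∀ α : List (Symbol T g.NT),
        g.Derives [Symbol.nonterminal g.initial] α → α.countP Symbol.isNT ≤ m - 1 := by

  obtain ⟨g, rfl⟩ := hL
  obtain ⟨P, M, _, hdvd, hper⟩ := KL_periodic g w hw
  have hf := semRules_finite (allNT_finite P g w) (letters_finite w) (M + P + 2)
  let X0 : List (Symbol T g.NT) := [Symbol.nonterminal g.initial]
  let p0 : Fin m × List T := (⟨0, by omega⟩, w ⟨0, by omega⟩)
  let q0 : Fin m × List T := (⟨m - 1, by omega⟩, w ⟨m - 1, by omega⟩)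
  have hX0 : X0 ∈ items g := .inl (List.suffix_refl _)
  have hp0 : p0 ∈ gst w := List.IsRotated.refl _
  have hlt : p0.1 < q0.1 := by
    simp only [p0, q0, Fin.mk_lt_mk]
    omega
  refine ⟨semG (allNT P g w) (letters w) (M + P + 2) hf (ntK g w (X0, p0, q0)), ?_, ?_⟩
  · ext z
    constructor
    · intro hz
      have h1 := (semG_derives hz).1
      have h2 : z ∈ formL [Symbol.nonterminal (ntK g w (X0, p0, q0))] :=
        h1 ((formL_terminals z).symm ▸ rfl : z ∈ formL (z.map Symbol.terminal))
      have h3 : z ∈ KL g w X0 p0 q0 := by simpa [formL, symL, ntK] using h2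
      exact (mem_language_iff_yld z).2 h3.1
    · intro hz
      exact main_complete hdvd hper hf _ ((mem_language_iff_yld z).1 hz) hX0 hp0 hlt
        (pth_of_wordBounded (by omega) (hsub hz))
  · intro α hα
    refine (count_le_formP α).trans ((semG_derives hα).2.trans ?_)
    have : formP [Symbol.nonterminal (ntK g w (X0, p0, q0))] = max (m - 1 - 0) 1 := by
      simp [formP, symP, ntK, p0, q0]
    refine this.le.trans ?_
    omega
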